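/- Sparse linear regression with fixed design: there exist constants c₁, C₁ > 0 depending only on (c, C) such that the following holds. Let n,d ∈ ℕ, s ∈ {1,…,d}, σ > 0, and Θ := {θ ∈ ℝ^d : ‖θ‖₀ ≤ s}. Assume X ∈ ℝ^{n×d} satisfies the design assumption with constants c, C: each column of X has Euclidean norm at most √n; if d = 1 then ‖X‖₂ ≥ c√n; if d ≥ 2 then ϑ(s∨2, 3) ≥ c and max over index sets T ⊆ {1,…,d} with |T| ≤ s∨2 of ‖X_T‖_op ≤ C√n. For θ ∈ Θ let 𝒫_θ := {N_n(Xθ, σ²I_n)}, and define the loss L(θ,θ') := ‖X(θ−θ')‖₂²/n. Then for all δ ∈ (0,1/4], c₁·σ²·(s·log(ed/s) + log(1/δ))/n ≤ M(δ, 𝒫_Θ, L) ≤ C₁·σ²·(s·log(ed/s) + log(1/δ))/n. -/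

import Mathlib

/-!
The upper bound is attained by least squares over the `s`-sparse vectors, minimized up to a small
error so that the estimator can be chosen measurable (`exists_measurable_near_argmin`). If `Δ` is
the estimation error, then `‖XΔ‖² ≤ 2σ⟪ξ, XΔ⟫ + error`, and `Δ` has at most `2s` nonzero entries.
For a fixed support the supremum of `⟪ξ, XΔ⟫² / ‖XΔ‖²` is a chi-square variable with at most `2s`
degrees of freedom (`chisq_tail`); a union bound over the supports (`noise_event`) costs
`s log (e d / s)` in the exponent.

Both lower bounds rest on a change of measure to the null `θ = 0`: if `L` is the likelihood ratio,
then `L ≤ K + L² / (4K)`, so `P_θ(A) ≤ K P₀(A) + exp (‖Xθ‖² / σ²) / (4K)` (`gaussian_shift_le`).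
With a single alternative this gives the term `log (1 / δ)` (`two_point_lower`). With `q ^ m`
alternatives, one nonzero entry in each of `m ≤ s` blocks of length `q`, it gives `m log q`
(`many_point_lower`): the successful events cover each observation at most as often as a Hamming
ball has elements. That requires `‖Xv‖ ≍ √n ‖v‖` for sparse `v`. The cone with constant `3` contains
all vectors with at most `2s` nonzero entries (`mem_wreCone_of_sparse`), which is the lower half; the
operator norm bound is the upper half.

When `d ≥ 4096`, blocks with `m log q` of order `s log (e d / s)` exist (`rate_comparison`); when
`d < 4096`, the quantity `s log (e d / s)` is bounded and the term `log (1 / δ) ≥ 1` dominates it.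
-/

open MeasureTheory ENNReal ProbabilityTheory
open scoped Classical

/-- The minimax `(1-δ)`th quantile. -/
noncomputable def minimaxQuantile {Θ 𝒳 : Type*} [MeasurableSpace Θ] [MeasurableSpace 𝒳]
    (Pfam : Θ → Set (Measure 𝒳)) (L : Θ → Θ → ℝ) (δ : ℝ) : ℝ≥0∞ :=
  ⨅ T : {f : 𝒳 → Θ // Measurable f}, ⨆ θ : Θ, ⨆ P ∈ Pfam θ,
    sInf {r : ℝ≥0∞ | ENNReal.ofReal (1 - δ) ≤ P {x | ENNReal.ofReal (L (T.1 x) θ) ≤ r}}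

/-- The SLOPE weights `λ_j = 6σ√(log(2d/j)/n)`, for `j ∈ {1,…,d}` (here `j : Fin d` is
zero-indexed). -/
noncomputable def slopeWeight (n d : ℕ) (σ : ℝ) (j : Fin d) : ℝ :=
  6 * σ * Real.sqrt (Real.log (2 * d / (j.1 + 1)) / n)

/-- `Σ_j λ_j v_j^♯`, where `v^♯` is the decreasing rearrangement of the absolute values of the
entries of `v`; since `λ` is decreasing, this equals the maximum over permutations. -/
noncomputable def slopeNorm (n d : ℕ) (σ : ℝ) (v : Fin d → ℝ) : ℝ :=
  ⨆ e : Equiv.Perm (Fin d), ∑ j, slopeWeight n d σ j * |v (e j)|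

/-- The weighted restricted eigenvalue cone `C_WRE(s, c₀)`. -/
noncomputable def wreCone (n d : ℕ) (σ : ℝ) (s : ℕ) (c₀ : ℝ) : Set (Fin d → ℝ) :=
  {v | slopeNorm n d σ v ≤ (1 + c₀) * Real.sqrt (∑ j, v j ^ 2) *
    Real.sqrt (∑ j : Fin d, if j.1 < s then slopeWeight n d σ j ^ 2 else 0)}

/-! ### Gaussian measures -/

lemma lintegral_pi_prod {ι : Type*} [Fintype ι] {μ : ι → Measure ℝ}
    [∀ i, IsProbabilityMeasure (μ i)] (I : Finset ι) {f : ι → ℝ → ℝ≥0∞}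
    (hf : ∀ i, Measurable (f i)) :
    ∫⁻ x, ∏ i ∈ I, f i (x i) ∂(Measure.pi μ) = ∏ i ∈ I, ∫⁻ t, f i t ∂(μ i) := by
  have hind : iIndepFun (fun i (x : ι → ℝ) => f i (x i)) (Measure.pi μ) :=
    iIndepFun_pi (fun i => (hf i).aemeasurable)
  rw [lintegral_prod_eq_prod_lintegral_of_indepFun I _ hind
    (fun i => (hf i).comp (measurable_pi_apply i))]
  refine Finset.prod_congr rfl fun i _ => ?_
  exact (measurePreserving_eval μ i).lintegral_comp (hf i)

lemma pi_withDensity {ι : Type*} [Fintype ι] {μ : ι → Measure ℝ}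
    [∀ i, IsProbabilityMeasure (μ i)] {f : ι → ℝ → ℝ≥0∞} (hf : ∀ i, Measurable (f i))
    [∀ i, SigmaFinite ((μ i).withDensity (f i))] :
    Measure.pi (fun i => (μ i).withDensity (f i)) =
      (Measure.pi μ).withDensity (fun x => ∏ i, f i (x i)) := by
  refine Measure.pi_eq fun s hs => ?_
  rw [withDensity_apply _ (.univ_pi hs), ← lintegral_indicator (.univ_pi hs)]
  have : (Set.univ.pi s).indicator (fun x : ι → ℝ => ∏ i, f i (x i)) =
      fun x => ∏ i, (s i).indicator (f i) (x i) := by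
    funext x
    by_cases hx : x ∈ Set.univ.pi s
    · rw [Set.indicator_of_mem hx]
      exact Finset.prod_congr rfl fun i _ =>
        (Set.indicator_of_mem (hx i (Set.mem_univ i)) _).symm
    · rw [Set.indicator_of_notMem hx]
      obtain ⟨i, hi⟩ : ∃ i, x i ∉ s i := by simpa [Set.mem_pi] using hx
      exact (Finset.prod_eq_zero (Finset.mem_univ i) (Set.indicator_of_notMem hi _)).symm
  rw [this, lintegral_pi_prod _ (fun i => (hf i).indicator (hs i))]
  refine Finset.prod_congr rfl fun i _ => ?_
  rw [lintegral_indicator (hs i), withDensity_apply _ (hs i)]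

lemma gaussianReal_eq_withDensity (m : ℝ) {v : NNReal} (hv : v ≠ 0) :
    gaussianReal m v = (gaussianReal 0 v).withDensity
      (fun x => ENNReal.ofReal (Real.exp (m / v * x - m ^ 2 / (2 * v)))) := by
  have hv' : (v : ℝ) ≠ 0 := by exact_mod_cast hv
  rw [gaussianReal_of_var_ne_zero _ hv, gaussianReal_of_var_ne_zero _ hv,
    ← withDensity_mul _ (measurable_gaussianPDF _ _) (by fun_prop)]
  congr 1
  funext x
  simp only [Pi.mul_apply, gaussianPDF, gaussianPDFReal]
  rw [← ENNReal.ofReal_mul (by positivity), mul_assoc _ (Real.exp _), ← Real.exp_add]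
  congr 3
  field_simp
  ring

/-- The second moment of the likelihood ratio of `N(m, v)` with respect to `N(0, v)`. -/
lemma lintegral_likelihood_sq (m : ℝ) {v : NNReal} (hv : v ≠ 0) :
    ∫⁻ x, ENNReal.ofReal (Real.exp (m / v * x - m ^ 2 / (2 * v))) ^ 2 ∂(gaussianReal 0 v) =
      ENNReal.ofReal (Real.exp (m ^ 2 / v)) := by
  have hv' : (v : ℝ) ≠ 0 := by exact_mod_cast hv
  have h1 : ∀ x : ℝ, ENNReal.ofReal (Real.exp (m / v * x - m ^ 2 / (2 * v))) ^ 2 =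
      ENNReal.ofReal (Real.exp (- (m ^ 2 / v))) * ENNReal.ofReal (Real.exp (2 * m / v * x)) := by
    intro x
    rw [← ENNReal.ofReal_pow (by positivity), ← ENNReal.ofReal_mul (by positivity),
      ← Real.exp_nat_mul, ← Real.exp_add]
    congr 2
    push_cast
    field_simp
    ring
  simp_rw [h1]
  rw [lintegral_const_mul _ (by fun_prop), ← ofReal_integral_eq_lintegral_ofReal
    (integrable_exp_mul_gaussianReal _) (Filter.Eventually.of_forall fun _ => by positivity)]
  have := congrFun (mgf_fun_id_gaussianReal (μ := 0) (v := v)) (2 * m / v)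
  rw [mgf] at this
  rw [this, ← ENNReal.ofReal_mul (by positivity), ← Real.exp_add]
  congr 2
  field_simp
  ring

/-- Change of measure in the Gaussian location model: the probability of any set under the
shifted law is bounded by a multiple of its probability under the centred law plus a multiple of
the second moment `exp (‖m‖² / v)` of the likelihood ratio. `A` need not be measurable. -/
lemma gaussian_shift_le {n : ℕ} (m : Fin n → ℝ) {v : NNReal} (hv : v ≠ 0) {K : ℝ} (hK : 0 < K)
    (A : Set (Fin n → ℝ)) :
    Measure.pi (fun i => gaussianReal (m i) v) A ≤
      ENNReal.ofReal K * Measure.pi (fun _ : Fin n => gaussianReal 0 v) A +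
        ENNReal.ofReal (Real.exp ((∑ i, m i ^ 2) / v) / (4 * K)) := by
  set ℓ : Fin n → ℝ → ℝ≥0∞ :=
    fun i x => ENNReal.ofReal (Real.exp (m i / v * x - m i ^ 2 / (2 * v))) with hℓ
  have hm : ∀ i, Measurable (ℓ i) := fun i => by simp only [hℓ]; fun_prop
  have hd : ∀ i, gaussianReal (m i) v = (gaussianReal 0 v).withDensity (ℓ i) :=
    fun i => gaussianReal_eq_withDensity (m i) hv
  have : ∀ i, SigmaFinite ((gaussianReal 0 v).withDensity (ℓ i)) := fun i => by
    rw [← hd i]; infer_instance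
  simp_rw [hd]
  rw [pi_withDensity hm, withDensity_apply' _ A]
  -- the arithmetic-geometric mean inequality `L ≤ K + L² / (4K)`
  have hpt : ∀ x : Fin n → ℝ, ∏ i, ℓ i (x i) ≤
      ENNReal.ofReal K + ENNReal.ofReal (1 / (4 * K)) * ∏ i, ℓ i (x i) ^ 2 := by
    intro x
    simp only [hℓ]
    rw [Finset.prod_pow, ← ENNReal.ofReal_prod_of_nonneg (fun i _ => by positivity)]
    set L := ∏ i, Real.exp (m i / v * x i - m i ^ 2 / (2 * v)) with hL
    have hL0 : 0 ≤ L := by positivity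
    rw [← ENNReal.ofReal_pow hL0, ← ENNReal.ofReal_mul (by positivity),
      ← ENNReal.ofReal_add hK.le (by positivity)]
    apply ENNReal.ofReal_le_ofReal
    have : K + 1 / (4 * K) * L ^ 2 - L = (2 * K - L) ^ 2 / (4 * K) := by field_simp; ring
    have : 0 ≤ (2 * K - L) ^ 2 / (4 * K) := by positivity
    linarith
  have hmeas : Measurable fun x : Fin n → ℝ => ∏ i, ℓ i (x i) ^ 2 :=
    Finset.measurable_fun_prod _ fun i _ => ((hm i).comp (measurable_pi_apply i)).pow_const 2
  calc ∫⁻ x in A, ∏ i, ℓ i (x i) ∂(Measure.pi fun _ => gaussianReal 0 v)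
      ≤ ∫⁻ x in A, (ENNReal.ofReal K + ENNReal.ofReal (1 / (4 * K)) * ∏ i, ℓ i (x i) ^ 2)
          ∂(Measure.pi fun _ => gaussianReal 0 v) := lintegral_mono fun x => hpt x
    _ = ENNReal.ofReal K * Measure.pi (fun _ : Fin n => gaussianReal 0 v) A +
        ENNReal.ofReal (1 / (4 * K)) * ∫⁻ x in A, ∏ i, ℓ i (x i) ^ 2
          ∂(Measure.pi fun _ => gaussianReal 0 v) := by
        rw [lintegral_add_left measurable_const, lintegral_const_mul _ hmeas]
        simp
    _ ≤ ENNReal.ofReal K * Measure.pi (fun _ : Fin n => gaussianReal 0 v) A +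
        ENNReal.ofReal (1 / (4 * K)) * ∫⁻ x, ∏ i, ℓ i (x i) ^ 2
          ∂(Measure.pi fun _ => gaussianReal 0 v) := by
        gcongr; exact Measure.restrict_le_self
    _ = _ := by
        rw [lintegral_pi_prod _ (f := fun i t => ℓ i t ^ 2) (fun i => (hm i).pow_const 2)]
        simp only [hℓ, lintegral_likelihood_sq _ hv]
        rw [← ENNReal.ofReal_prod_of_nonneg (fun i _ => by positivity), ← Real.exp_sum,
          ← ENNReal.ofReal_mul (by positivity), Finset.sum_div]
        congr 2
        ring

lemma lintegral_exp_sq_le :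
    ∫⁻ x, ENNReal.ofReal (Real.exp (x ^ 2 / 4)) ∂(gaussianReal 0 1) ≤
      ENNReal.ofReal (Real.exp 1) := by
  rw [gaussianReal_of_var_ne_zero _ one_ne_zero,
    lintegral_withDensity_eq_lintegral_mul _ (measurable_gaussianPDF _ _) (by fun_prop)]
  have h1 : ∀ x : ℝ, (gaussianPDF 0 1 * fun x => ENNReal.ofReal (Real.exp (x ^ 2 / 4))) x =
      ENNReal.ofReal ((√(2 * Real.pi))⁻¹ * Real.exp (-(1/4) * x ^ 2)) := by
    intro x
    simp only [Pi.mul_apply, gaussianPDF, gaussianPDFReal, NNReal.coe_one, mul_one, sub_zero]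
    rw [← ENNReal.ofReal_mul (by positivity), mul_assoc, ← Real.exp_add]
    congr 3
    ring
  simp_rw [h1]
  rw [← ofReal_integral_eq_lintegral_ofReal
    ((integrable_exp_neg_mul_sq (by norm_num : (0:ℝ) < 1/4)).const_mul _)
    (Filter.Eventually.of_forall fun _ => by positivity), integral_const_mul, integral_gaussian]
  apply ENNReal.ofReal_le_ofReal
  have h2 : √(Real.pi / (1/4)) = √2 * √(2 * Real.pi) := by
    rw [← Real.sqrt_mul (by norm_num)]; congr 1; ring
  have h3 : 0 < √(2 * Real.pi) := by positivity
  rw [h2]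
  field_simp
  have : √2 ≤ 2 := by rw [Real.sqrt_le_left (by norm_num)]; norm_num
  linarith [Real.add_one_le_exp 1]

open scoped RealInnerProductSpace in
/-- Tail bound for the supremum of `⟪ξ, u⟫² / ‖u‖²` over a subspace of dimension at most `k`: it
is the squared norm of the projection of `ξ`, which has a chi-square law with at most `k` degrees
of freedom. -/
lemma chisq_tail {n k : ℕ} (U : Submodule ℝ (EuclideanSpace ℝ (Fin n)))
    (hU : Module.finrank ℝ U ≤ k) (t : ℝ) :
    stdGaussian (EuclideanSpace ℝ (Fin n)) {ξ | ∃ u ∈ U, t * ‖u‖ ^ 2 < ⟪ξ, u⟫ ^ 2} ≤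
      ENNReal.ofReal (Real.exp (k - t / 4)) := by
  set w := stdOrthonormalBasis ℝ U with hw
  have hwo : Orthonormal ℝ (fun i => (w i : EuclideanSpace ℝ (Fin n))) :=
    w.orthonormal.comp_linearIsometry U.subtypeₗᵢ
  -- `b` is an orthonormal basis of the whole space whose members indexed by `I` span `U`
  obtain ⟨u, b, hsub, hb⟩ := hwo.toSubtypeRange.exists_orthonormalBasis_extension
  set I : Finset u := Finset.univ.filter fun i => (i : EuclideanSpace ℝ (Fin n)) ∈
    Set.range (fun i => (w i : EuclideanSpace ℝ (Fin n))) with hI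
  have hcard : I.card ≤ k := by
    refine le_trans ?_ hU
    have h1 : I.card ≤ (Finset.univ.image
        (fun i => (w i : EuclideanSpace ℝ (Fin n)))).card := by
      refine Finset.card_le_card_of_injOn (fun i => (i : EuclideanSpace ℝ (Fin n))) ?_
        (Subtype.val_injective.injOn)
      intro i hi
      simpa [hI] using hi
    exact h1.trans (Finset.card_image_le.trans (by simp))
  have horth : ∀ i ∉ I, ∀ x ∈ U, ⟪b i, x⟫ = 0 := by
    intro i hi x hx
    have hx' : x = ∑ j, ⟪w j, ⟨x, hx⟩⟫ • (w j : EuclideanSpace ℝ (Fin n)) := by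
      have := congrArg (Submodule.subtype U) (w.sum_repr' ⟨x, hx⟩)
      simpa using this.symm
    rw [hx', inner_sum]
    refine Finset.sum_eq_zero fun j _ => ?_
    rw [inner_smul_right]
    have hj : (w j : EuclideanSpace ℝ (Fin n)) ∈ u := hsub ⟨j, rfl⟩
    have hne : i ≠ ⟨_, hj⟩ := by
      rintro rfl
      exact hi (by simp [hI])
    have := b.orthonormal.2 hne
    rw [hb] at this ⊢
    simp only at this
    simp [this]
  -- rotation invariance: the coordinates of `ξ` in the basis `b` are independent `N(0, 1)`
  rw [stdGaussian_eq_map_pi_orthonormalBasis b]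
  have hmeas : Measurable fun x : u → ℝ => ∑ i, x i • b i := by fun_prop
  set E := {ξ : EuclideanSpace ℝ (Fin n) | ∃ u ∈ U, t * ‖u‖ ^ 2 < ⟪ξ, u⟫ ^ 2} with hE
  have hEopen : IsOpen E := by
    have : E = ⋃ u ∈ U, {ξ | t * ‖u‖ ^ 2 < ⟪ξ, u⟫ ^ 2} := by ext; simp [hE]
    rw [this]
    exact isOpen_biUnion fun u _ => isOpen_lt (by fun_prop) (by fun_prop)
  rw [Measure.map_apply hmeas hEopen.measurableSet]
  have hsubset : (fun x : u → ℝ => ∑ i, x i • b i) ⁻¹' E ⊆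
      {x | ENNReal.ofReal (Real.exp (t / 4)) ≤
        ∏ i ∈ I, ENNReal.ofReal (Real.exp (x i ^ 2 / 4))} := by
    rintro z ⟨x, hx, hlt⟩
    simp only [Set.mem_ofPred_eq]
    rw [← ENNReal.ofReal_prod_of_nonneg (fun i _ => by positivity), ← Real.exp_sum]
    apply ENNReal.ofReal_le_ofReal
    apply Real.exp_le_exp.2
    rw [← Finset.sum_div]
    have h1 : ⟪∑ i, z i • b i, x⟫ = ∑ i ∈ I, z i * ⟪b i, x⟫ := by
      rw [sum_inner]
      simp_rw [real_inner_smul_left]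
      refine (Finset.sum_subset (Finset.subset_univ I) fun i _ hi => ?_).symm
      rw [horth i hi x hx, mul_zero]
    have h2 : (∑ i ∈ I, z i * ⟪b i, x⟫) ^ 2 ≤ (∑ i ∈ I, z i ^ 2) * ‖x‖ ^ 2 := by
      refine (Finset.sum_mul_sq_le_sq_mul_sq I _ _).trans ?_
      refine mul_le_mul_of_nonneg_left ?_ (Finset.sum_nonneg fun _ _ => sq_nonneg _)
      rw [← b.sum_sq_inner_right x]
      exact Finset.sum_le_sum_of_subset_of_nonneg (Finset.subset_univ _)
        fun _ _ _ => sq_nonneg _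
    rw [h1] at hlt
    have h3 : t * ‖x‖ ^ 2 < (∑ i ∈ I, z i ^ 2) * ‖x‖ ^ 2 := hlt.trans_le h2
    have h4 := lt_of_mul_lt_mul_right h3 (sq_nonneg _)
    linarith
  have hm : ∀ _ : u, Measurable fun x : ℝ => ENNReal.ofReal (Real.exp (x ^ 2 / 4)) :=
    fun _ => by fun_prop
  have hM := mul_meas_ge_le_lintegral (μ := Measure.pi fun _ : u => gaussianReal 0 1)
    (f := fun x => ∏ i ∈ I, ENNReal.ofReal (Real.exp (x i ^ 2 / 4)))
    (Finset.measurable_fun_prod _ fun i _ => (hm i).comp (measurable_pi_apply i))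
    (ENNReal.ofReal (Real.exp (t / 4)))
  rw [lintegral_pi_prod I hm] at hM
  have hK : ∏ i ∈ I, ∫⁻ x, ENNReal.ofReal (Real.exp (x ^ 2 / 4)) ∂(gaussianReal 0 1) ≤
      ENNReal.ofReal (Real.exp k) := by
    refine (Finset.prod_le_prod' fun i _ => lintegral_exp_sq_le).trans ?_
    rw [Finset.prod_const, ← ENNReal.ofReal_pow (by positivity), ← Real.exp_nat_mul, mul_one]
    apply ENNReal.ofReal_le_ofReal
    apply Real.exp_le_exp.2
    exact_mod_cast hcard
  refine (measure_mono hsubset).trans ?_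
  rw [Real.exp_sub, ENNReal.ofReal_div_of_pos (by positivity), ENNReal.le_div_iff_mul_le
    (by left; positivity) (by left; simp), mul_comm]
  exact hM.trans hK

/-! ### The restricted eigenvalue cone -/

lemma slopeWeight_nonneg (n d : ℕ) {σ : ℝ} (hσ : 0 < σ) (j : Fin d) :
    0 ≤ slopeWeight n d σ j := by unfold slopeWeight; positivity

lemma slopeWeight_anti (n d : ℕ) {σ : ℝ} (hσ : 0 < σ) {i j : Fin d} (hij : i ≤ j) :
    slopeWeight n d σ j ≤ slopeWeight n d σ i := by
  unfold slopeWeight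
  have hd : 0 < d := i.pos
  have : (i.1 : ℝ) ≤ j.1 := by exact_mod_cast hij
  gcongr

/-- Since the weights decrease, those of index at least `s'` are bounded by the quadratic mean of
the first `s'` ones; hence any `2s` weights have square sum at most `3` times that of the first
`s'` ones, and `16` is the constant that the cone allows for. -/
lemma sum_slopeWeight_sq_le (n : ℕ) {d s s' : ℕ} (hs : 1 ≤ s') (hss : s ≤ s') {σ : ℝ} (hσ : 0 < σ)
    (J : Finset (Fin d)) (hJ : J.card ≤ 2 * s) :
    ∑ j ∈ J, slopeWeight n d σ j ^ 2 ≤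
      16 * ∑ j : Fin d, if j.1 < s' then slopeWeight n d σ j ^ 2 else 0 := by
  set S := ∑ j : Fin d, if j.1 < s' then slopeWeight n d σ j ^ 2 else 0 with hS
  have hs0 : (0 : ℝ) < s' := by exact_mod_cast hs
  have hS0 : 0 ≤ S := Finset.sum_nonneg fun j _ => by split_ifs <;> positivity
  have htail : ∀ j : Fin d, s' ≤ j.1 → slopeWeight n d σ j ^ 2 ≤ S / s' := by
    intro j hj
    rw [le_div_iff₀ hs0, hS, ← Finset.sum_filter]
    have hcard : (Finset.univ.filter fun i : Fin d => i.1 < s').card = s' := by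
      rw [Fin.card_filter_val_lt]; omega
    calc slopeWeight n d σ j ^ 2 * s'
        = ∑ i ∈ Finset.univ.filter (fun i : Fin d => i.1 < s'), slopeWeight n d σ j ^ 2 := by
          rw [Finset.sum_const, hcard, nsmul_eq_mul, mul_comm]
      _ ≤ _ := by
          refine Finset.sum_le_sum fun i hi => ?_
          have hi' : i.1 < s' := by simpa using hi
          have := slopeWeight_nonneg n d hσ j
          have := slopeWeight_anti n d hσ (i := i) (j := j) (by rw [Fin.le_def]; omega)
          gcongr
  have hle : ∀ j : Fin d, slopeWeight n d σ j ^ 2 ≤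
      (if j.1 < s' then slopeWeight n d σ j ^ 2 else 0) + S / s' := by
    intro j
    split_ifs with h
    · have : 0 ≤ S / s' := by positivity
      linarith
    · linarith [htail j (by omega)]
  calc ∑ j ∈ J, slopeWeight n d σ j ^ 2
      ≤ ∑ j ∈ J, ((if j.1 < s' then slopeWeight n d σ j ^ 2 else 0) + S / s') :=
        Finset.sum_le_sum fun j _ => hle j
    _ = (∑ j ∈ J, if j.1 < s' then slopeWeight n d σ j ^ 2 else 0) + J.card * (S / s') := by
        rw [Finset.sum_add_distrib, Finset.sum_const, nsmul_eq_mul]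
    _ ≤ S + (2 * s') * (S / s') := by
        have h1 : (J.card : ℝ) ≤ 2 * s' := by exact_mod_cast hJ.trans (by omega)
        have h2 : (∑ j ∈ J, if j.1 < s' then slopeWeight n d σ j ^ 2 else 0) ≤ S :=
          Finset.sum_le_sum_of_subset_of_nonneg (Finset.subset_univ _)
            fun j _ _ => by split_ifs <;> positivity
        gcongr
    _ ≤ 16 * S := by field_simp; linarith

/-- Vectors with at most `2s` nonzero entries lie in the cone: by Cauchy-Schwarz the weighted sum is
at most `‖v‖` times the root of the square sum of `2s` weights, and `(1 + 3)² = 16`. -/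
lemma mem_wreCone_of_sparse (n : ℕ) {d s s' : ℕ} (hs : 1 ≤ s') (hss : s ≤ s') {σ : ℝ}
    (hσ : 0 < σ) (v : Fin d → ℝ) (hv : (Finset.univ.filter fun j => v j ≠ 0).card ≤ 2 * s) :
    v ∈ wreCone n d σ s' 3 := by
  simp only [wreCone, Set.mem_ofPred_eq, slopeNorm]
  refine ciSup_le fun e => ?_
  set J : Finset (Fin d) := Finset.univ.filter fun j => v (e j) ≠ 0 with hJ
  have hJc : J.card ≤ 2 * s := by
    refine le_trans (Finset.card_le_card_of_injOn e ?_ e.injective.injOn) hv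
    intro j hj
    simpa [hJ] using hj
  have h1 : ∑ j, slopeWeight n d σ j * |v (e j)| = ∑ j ∈ J, slopeWeight n d σ j * |v (e j)| := by
    refine (Finset.sum_subset (Finset.subset_univ J) fun j _ hj => ?_).symm
    have : v (e j) = 0 := by simpa [hJ] using hj
    simp [this]
  have h2 : ∑ j ∈ J, |v (e j)| ^ 2 ≤ ∑ j, v j ^ 2 := by
    rw [← Equiv.sum_comp e (fun j => v j ^ 2)]
    simp only [sq_abs]
    exact Finset.sum_le_sum_of_subset_of_nonneg (Finset.subset_univ _) fun _ _ _ => sq_nonneg _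
  have h3 := sum_slopeWeight_sq_le n hs hss hσ J hJc
  rw [h1]
  refine (Real.sum_mul_le_sqrt_mul_sqrt J _ _).trans ?_
  have h4 : √(∑ j ∈ J, slopeWeight n d σ j ^ 2) ≤
      4 * √(∑ j : Fin d, if j.1 < s' then slopeWeight n d σ j ^ 2 else 0) := by
    refine (Real.sqrt_le_sqrt h3).trans ?_
    rw [Real.sqrt_mul (by norm_num), show (16 : ℝ) = 4 ^ 2 by norm_num,
      Real.sqrt_sq (by norm_num)]
  calc _ ≤ (4 * √(∑ j : Fin d, if j.1 < s' then slopeWeight n d σ j ^ 2 else 0)) *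
        √(∑ j, v j ^ 2) := by gcongr
    _ = _ := by ring

/-! ### Lower bounds on the minimax quantile -/

/-- A minimax lower bound follows once every estimator fails, for some `θ`, to have loss below `r`
with probability `1 - δ`. -/
lemma le_minimaxQuantile {Θ 𝒳 : Type*} [MeasurableSpace Θ] [MeasurableSpace 𝒳]
    (μ : Θ → Measure 𝒳) (L : Θ → Θ → ℝ) (δ r : ℝ)
    (h : ∀ T : 𝒳 → Θ, Measurable T → ∃ θ, μ θ {x | L (T x) θ < r} < ENNReal.ofReal (1 - δ)) :
    ENNReal.ofReal r ≤ minimaxQuantile (fun θ => {μ θ}) L δ := by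
  refine le_iInf fun T => ?_
  obtain ⟨θ, hθ⟩ := h T.1 T.2
  refine le_iSup_of_le θ (le_iSup₂_of_le (μ θ) rfl (le_sInf fun r' hr' => ?_))
  by_contra hlt
  push Not at hlt
  refine absurd (lt_of_le_of_lt (le_trans hr' (measure_mono ?_)) hθ) (lt_irrefl _)
  intro x hx
  exact ((ENNReal.ofReal_lt_ofReal_iff').1 (lt_of_le_of_lt hx hlt)).1

lemma minimaxQuantile_le {Θ 𝒳 : Type*} [MeasurableSpace Θ] [MeasurableSpace 𝒳]
    (μ : Θ → Measure 𝒳) (L : Θ → Θ → ℝ) (δ r : ℝ) (T : 𝒳 → Θ) (hT : Measurable T)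
    (h : ∀ θ, ENNReal.ofReal (1 - δ) ≤ μ θ {x | L (T x) θ ≤ r}) :
    minimaxQuantile (fun θ => {μ θ}) L δ ≤ ENNReal.ofReal r := by
  refine iInf_le_of_le ⟨T, hT⟩ (iSup_le fun θ => iSup₂_le fun P hP => sInf_le ?_)
  rw [Set.mem_singleton_iff] at hP
  subst hP
  refine (h θ).trans (measure_mono fun x hx => ?_)
  exact ENNReal.ofReal_le_ofReal hx

/-- Number of functions that agree with `g` in at least half of the `m` coordinates. -/
lemma card_hamming_ball_le (m q : ℕ) (hq : 0 < q) (g : Fin m → Fin q) :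
    ((Finset.univ.filter fun f : Fin m → Fin q =>
      2 * (Finset.univ.filter fun i => f i ≠ g i).card ≤ m).card : ℝ) ≤ (2 * √q) ^ m := by
  have hq' : (1 : ℝ) ≤ √q := by rw [Real.one_le_sqrt]; exact_mod_cast hq
  have hq0 : (0 : ℝ) < √q := by linarith
  -- each coordinate in agreement weighs `√q`, each other one `1 / √q`
  have hpt : ∀ f : Fin m → Fin q, (if 2 * (Finset.univ.filter fun i => f i ≠ g i).card ≤ m
      then (1 : ℝ) else 0) ≤ ∏ i, (if f i ≠ g i then (√q)⁻¹ else √q) := by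
    intro f
    split_ifs with h
    · rw [Finset.prod_ite, Finset.prod_const, Finset.prod_const, inv_pow, ← div_eq_inv_mul,
        one_le_div (by positivity)]
      have h1 := Finset.card_filter_add_card_filter_not (s := (Finset.univ : Finset (Fin m)))
        (fun i => f i ≠ g i)
      rw [Finset.card_univ, Fintype.card_fin] at h1
      exact pow_le_pow_right₀ hq' (by omega)
    · exact Finset.prod_nonneg fun i _ => by split_ifs <;> positivity
  calc _ = ∑ f : Fin m → Fin q, (if 2 * (Finset.univ.filter fun i => f i ≠ g i).card ≤ m
      then (1 : ℝ) else 0) := by rw [Finset.sum_boole]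
    _ ≤ ∑ f : Fin m → Fin q, ∏ i, (if f i ≠ g i then (√q)⁻¹ else √q) :=
        Finset.sum_le_sum fun f _ => hpt f
    _ = ∏ i : Fin m, ∑ a : Fin q, (if a ≠ g i then (√q)⁻¹ else √q) := by
        rw [Finset.prod_univ_sum, Fintype.piFinset_univ]
    _ ≤ ∏ i : Fin m, (2 * √q) := by
        refine Finset.prod_le_prod (fun i _ => Finset.sum_nonneg fun a _ => by
          split_ifs <;> positivity) fun i _ => ?_
        have : ∀ a : Fin q, (if a ≠ g i then (√q)⁻¹ else √q) ≤
            (√q)⁻¹ + if a = g i then √q else 0 := by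
          intro a
          by_cases h : a = g i <;> simp [h]
        refine (Finset.sum_le_sum fun a _ => this a).trans ?_
        rw [Finset.sum_add_distrib, Finset.sum_ite_eq' Finset.univ (g i)]
        simp only [Finset.sum_const, Finset.card_univ, Fintype.card_fin, nsmul_eq_mul,
          Finset.mem_univ, if_true]
        have : (q : ℝ) * (√q)⁻¹ = √q := by
          nth_rewrite 1 [← Real.mul_self_sqrt (Nat.cast_nonneg q)]
          field_simp
        linarith
    _ = _ := by simp

/-- The parameter space: vectors with at most `s` nonzero entries. -/
abbrev SparseVec (d s : ℕ) : Type :=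
  {θ : Fin d → ℝ // (Finset.univ.filter fun i => θ i ≠ 0).card ≤ s}

/-- The law `N(Xθ, σ² I)` of the observation. -/
noncomputable abbrev obsLaw {n d : ℕ} (X : Matrix (Fin n) (Fin d) ℝ) (σ : ℝ) (θ : Fin d → ℝ) :
    Measure (Fin n → ℝ) :=
  Measure.pi fun i : Fin n => gaussianReal (X.mulVec θ i) ((σ ^ 2).toNNReal)

/-- The prediction loss `‖X(θ₁ - θ₂)‖² / n`. -/
noncomputable abbrev predLoss {n d s : ℕ} (X : Matrix (Fin n) (Fin d) ℝ) (θ₁ θ₂ : SparseVec d s) :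
    ℝ :=
  (∑ i, (X.mulVec (θ₁.1 - θ₂.1) i) ^ 2) / n

lemma measurable_predLoss {n d s : ℕ} (X : Matrix (Fin n) (Fin d) ℝ) (θ : SparseVec d s)
    {T : (Fin n → ℝ) → SparseVec d s} (hT : Measurable T) :
    Measurable fun y => predLoss X (T y) θ := by
  have : Continuous fun θ' : SparseVec d s => predLoss X θ' θ := by
    unfold predLoss Matrix.mulVec dotProduct
    fun_prop
  exact this.measurable.comp hT

/-- The factor `4` comes from `(x + y)² ≤ 2x² + 2y²`. -/
lemma predLoss_triangle {n d s : ℕ} (X : Matrix (Fin n) (Fin d) ℝ) (θ θ₁ θ₂ : SparseVec d s)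
    {r : ℝ} (h₁ : predLoss X θ θ₁ < r) (h₂ : predLoss X θ θ₂ < r) :
    predLoss X θ₁ θ₂ < 4 * r := by
  have : predLoss X θ₁ θ₂ ≤ 2 * predLoss X θ θ₁ + 2 * predLoss X θ θ₂ := by
    simp only [predLoss]
    rw [← mul_div_assoc, ← mul_div_assoc, ← add_div, Finset.mul_sum, Finset.mul_sum,
      ← Finset.sum_add_distrib]
    gcongr with i
    simp only [Matrix.mulVec_sub, Pi.sub_apply]
    nlinarith [sq_nonneg (X.mulVec θ.1 i - X.mulVec θ₁.1 i + (X.mulVec θ.1 i - X.mulVec θ₂.1 i))]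
  linarith

/-- Change of measure from `θ` to the null parameter, the squared signal-to-noise ratio
`‖Xθ‖² / σ²` being at most `a`. -/
lemma obsLaw_le {n d : ℕ} (X : Matrix (Fin n) (Fin d) ℝ) {σ : ℝ} (hσ : 0 < σ) (θ : Fin d → ℝ)
    {a K : ℝ} (ha : ∑ i, X.mulVec θ i ^ 2 ≤ σ ^ 2 * a) (hK : 0 < K) (A : Set (Fin n → ℝ)) :
    (obsLaw X σ θ).real A ≤ K * (obsLaw X σ 0).real A + Real.exp a / (4 * K) := by
  have hσ2 : 0 < σ ^ 2 := by positivity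
  have hv : (σ ^ 2).toNNReal ≠ 0 := by simpa using hσ.ne'
  have h := gaussian_shift_le (X.mulVec θ) hv hK A
  have h0 : obsLaw X σ 0 = Measure.pi (fun _ : Fin n => gaussianReal 0 (σ ^ 2).toNNReal) := by
    simp [obsLaw, Matrix.mulVec_zero]
  rw [← h0] at h
  have h' := ENNReal.toReal_mono (by finiteness) h
  rw [ENNReal.toReal_add (by finiteness) (by finiteness), ENNReal.toReal_mul,
    ENNReal.toReal_ofReal hK.le, ENNReal.toReal_ofReal (by positivity)] at h'
  refine h'.trans ?_
  rw [Real.coe_toNNReal _ hσ2.le]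
  simp only [Measure.real]
  gcongr
  rw [div_le_iff₀ hσ2]
  linarith

/-- Lower bound for testing `0` against a multiple of one coordinate vector, scaled so that
`‖Xθ‖² = σ² log (1 / δ) / 4`. An estimator that succeeds under `0` is close to `θ` with null
probability at most `δ`, which the change of measure turns into a bound below `1 - δ` under `θ`. -/
lemma two_point_lower {n d s : ℕ} (hn : 0 < n) (X : Matrix (Fin n) (Fin d) ℝ) {σ : ℝ}
    (hσ : 0 < σ) (hs : 1 ≤ s) (j : Fin d) (hj : 0 < ∑ i, X i j ^ 2) {δ : ℝ} (hδ : 0 < δ)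
    (hδ' : δ ≤ 1 / 4) :
    ENNReal.ofReal (σ ^ 2 * Real.log (1 / δ) / (16 * n)) ≤
      minimaxQuantile (fun θ : SparseVec d s => {obsLaw X σ θ.1}) (predLoss X) δ := by
  refine le_minimaxQuantile (fun θ : SparseVec d s => obsLaw X σ θ.1) _ _ _ fun T hT => ?_
  have hn' : (0 : ℝ) < n := by exact_mod_cast hn
  set a : ℝ := Real.log (1 / δ) / 4 with ha
  have hlog : 0 < Real.log (1 / δ) := Real.log_pos (by rw [lt_div_iff₀ hδ]; linarith)
  set t : ℝ := √(σ ^ 2 * a / ∑ i, X i j ^ 2) with ht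
  have ht2 : t ^ 2 * ∑ i, X i j ^ 2 = σ ^ 2 * a := by
    rw [ht, Real.sq_sqrt (by positivity), div_mul_cancel₀ _ hj.ne']
  let θ₀ : SparseVec d s := ⟨0, by simp⟩
  let θ₁ : SparseVec d s := ⟨Pi.single j t, by
    refine le_trans (Finset.card_le_card (t := {j}) ?_) (by simpa using hs)
    intro i hi
    by_contra hne
    simp at hi hne
    simp [hne] at hi⟩
  have hX1 : ∑ i, X.mulVec θ₁.1 i ^ 2 = σ ^ 2 * a := by
    rw [← ht2, Finset.mul_sum]
    refine Finset.sum_congr rfl fun i _ => ?_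
    simp [θ₁, Matrix.mulVec_single]
    ring
  by_contra hcon
  push Not at hcon
  set r := σ ^ 2 * Real.log (1 / δ) / (16 * n) with hr
  have hreal : ∀ θ : SparseVec d s, 1 - δ ≤ (obsLaw X σ θ.1).real {y | predLoss X (T y) θ < r} := by
    intro θ
    have := ENNReal.toReal_mono (by finiteness) (hcon θ)
    rwa [ENNReal.toReal_ofReal (by linarith)] at this
  have hdisj : {y | predLoss X (T y) θ₁ < r} ⊆ {y | predLoss X (T y) θ₀ < r}ᶜ := by
    intro y hy hy0
    have := predLoss_triangle X (T y) θ₁ θ₀ hy hy0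
    have h2 : predLoss X θ₁ θ₀ = 4 * r := by
      simp only [predLoss, θ₀, sub_zero, hX1, hr, ha]
      field_simp
      norm_num
    linarith
  have hmeas : MeasurableSet {y | predLoss X (T y) θ₀ < r} :=
    measurableSet_lt (measurable_predLoss X θ₀ hT) measurable_const
  have hA1 : (obsLaw X σ 0).real {y | predLoss X (T y) θ₁ < r} ≤ δ := by
    refine (measureReal_mono hdisj).trans ?_
    rw [probReal_compl_eq_one_sub hmeas]
    have := hreal θ₀
    simp only [θ₀] at this ⊢
    linarith
  -- `w = δ ^ (-1/4)`, and the change of measure is used with `K = w² = δ ^ (-1/2)`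
  set w := Real.exp a with hw
  have hw0 : 0 < w := Real.exp_pos a
  have hw4 : δ * w ^ 4 = 1 := by
    rw [hw, ← Real.exp_nat_mul, ha]
    push_cast
    rw [mul_div_cancel₀ _ (by norm_num), Real.exp_log (by positivity)]
    field_simp
  have h3 := obsLaw_le X hσ θ₁.1 hX1.le (K := w ^ 2) (by positivity)
    {y | predLoss X (T y) θ₁ < r}
  have h4 := hreal θ₁
  have h5 : w ^ 2 * (obsLaw X σ 0).real {y | predLoss X (T y) θ₁ < r} ≤ w ^ 2 * δ := by gcongr
  have hw2 : 2 ≤ w ^ 2 := by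
    have : 4 ≤ w ^ 4 := by
      by_contra hlt
      push Not at hlt
      have h6 : δ * w ^ 4 < δ * 4 := by gcongr
      linarith
    nlinarith [sq_nonneg w]
  have hw1 : 5 / 4 ≤ w := by nlinarith
  have h7 : w ^ 2 * δ ≤ 1 / 2 := by
    have : w ^ 2 * δ * w ^ 2 = 1 := by rw [← hw4]; ring
    have : w ^ 2 * δ * 2 ≤ w ^ 2 * δ * w ^ 2 := by gcongr
    linarith
  have h8 : w / (4 * w ^ 2) ≤ 1 / 5 := by
    rw [div_le_div_iff₀ (by positivity) (by norm_num)]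
    nlinarith
  linarith

/-- If each point lies in at most `V` of the sets, their probabilities add up to at most `V`. -/
lemma sum_filter_indicator_le {ι Ω : Type*} [Fintype ι] [MeasurableSpace Ω] (P : Measure Ω)
    [IsProbabilityMeasure P] (A : ι → Set Ω) (hA : ∀ i, MeasurableSet (A i)) {V : ℝ}
    (hV : ∀ y, ((Finset.univ.filter fun i => y ∈ A i).card : ℝ) ≤ V) :
    ∑ i, P.real (A i) ≤ V := by
  have h1 : ∀ i, P.real (A i) = ∫ y, (A i).indicator (fun _ => (1 : ℝ)) y ∂P := fun i => by
    rw [integral_indicator (hA i)]; simp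
  simp_rw [h1]
  have hint : ∀ i, Integrable ((A i).indicator (fun _ => (1 : ℝ))) P :=
    fun i => (integrable_const _).indicator (hA i)
  rw [← integral_finsetSum _ (fun i _ => hint i)]
  have h2 : ∀ y, ∑ i, (A i).indicator (fun _ => (1 : ℝ)) y ≤ V := by
    intro y
    refine le_trans (le_of_eq ?_) (hV y)
    simp [Set.indicator_apply, Finset.sum_boole]
  refine (integral_mono (integrable_finsetSum _ fun i _ => hint i) (integrable_const V) h2).trans ?_
  simp

/-- Lower bound from `q ^ m` hypotheses: for `f : Fin m → Fin q`, the `i`-th of `m` disjoint blocks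
of `q` coordinates carries a single entry `t`, at position `f i`. By the lower bound on sparse
vectors, a given estimate can be good only for the `f` in one Hamming ball, so the probabilities of
success under the null add up to at most `(2√q) ^ m`. By the upper bound on sparse vectors, the
hypotheses are so close to the null in chi-square divergence that the average probability of success
stays below `3/4`. -/
lemma many_point_lower {n d s m q : ℕ} (hn : 0 < n) (X : Matrix (Fin n) (Fin d) ℝ) {σ c C : ℝ}
    (hσ : 0 < σ) (hc : 0 < c) (hC : 0 < C) (hm : 1 ≤ m) (hms : m ≤ s) (hq : 4096 ≤ q)
    (hmq : m * q ≤ d)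
    (hlow : ∀ v : Fin d → ℝ, (Finset.univ.filter fun j => v j ≠ 0).card ≤ 2 * s →
      c ^ 2 * n * ∑ j, v j ^ 2 ≤ ∑ i, X.mulVec v i ^ 2)
    (hup : ∀ v : Fin d → ℝ, (Finset.univ.filter fun j => v j ≠ 0).card ≤ s →
      ∑ i, X.mulVec v i ^ 2 ≤ C ^ 2 * n * ∑ j, v j ^ 2)
    {δ : ℝ} (hδ' : δ ≤ 1 / 4) :
    ENNReal.ofReal (c ^ 2 * σ ^ 2 * (m * Real.log q) / (16 * C ^ 2 * n)) ≤
      minimaxQuantile (fun θ : SparseVec d s => {obsLaw X σ θ.1}) (predLoss X) δ := by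
  refine le_minimaxQuantile (fun θ : SparseVec d s => obsLaw X σ θ.1) _ _ _ fun T hT => ?_
  have hn' : (0 : ℝ) < n := by exact_mod_cast hn
  have hm' : (0 : ℝ) < m := by exact_mod_cast hm
  have hq' : (4096 : ℝ) ≤ q := by exact_mod_cast hq
  have hlogq : 0 < Real.log q := Real.log_pos (by linarith)
  set t : ℝ := √(σ ^ 2 * Real.log q / (4 * C ^ 2 * n)) with ht
  have ht2 : t ^ 2 = σ ^ 2 * Real.log q / (4 * C ^ 2 * n) := Real.sq_sqrt (by positivity)
  set r := c ^ 2 * σ ^ 2 * (m * Real.log q) / (16 * C ^ 2 * n) with hr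
  have hrt : 4 * r = c ^ 2 * t ^ 2 * m := by rw [ht2, hr]; field_simp; norm_num
  let φ : Fin m × Fin q → Fin d := fun p => Fin.castLE hmq (finProdFinEquiv p)
  have hφ : Function.Injective φ :=
    (Fin.castLE_injective hmq).comp finProdFinEquiv.injective
  let a : (Fin m → Fin q) → Fin m × Fin q → ℝ := fun f p => if f p.1 = p.2 then t else 0
  let v : (Fin m → Fin q) → Fin d → ℝ := fun f => Function.extend φ (a f) 0
  have hsupp : ∀ f, (Finset.univ.filter fun j => v f j ≠ 0) ⊆
      Finset.univ.image fun i => φ (i, f i) := by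
    intro f j hj
    have hj' : v f j ≠ 0 := by simpa using hj
    by_cases hex : ∃ p, φ p = j
    · obtain ⟨p, rfl⟩ := hex
      simp only [v, hφ.extend_apply, a] at hj'
      have hp : f p.1 = p.2 := by by_contra h; simp [h] at hj'
      exact Finset.mem_image.2 ⟨p.1, Finset.mem_univ _, by rw [hp]⟩
    · exact absurd (Function.extend_apply' _ _ _ hex) hj'
  have hcard : ∀ f, (Finset.univ.filter fun j => v f j ≠ 0).card ≤ m := fun f =>
    (Finset.card_le_card (hsupp f)).trans (Finset.card_image_le.trans (by simp))
  let θ : (Fin m → Fin q) → SparseVec d s := fun f => ⟨v f, (hcard f).trans hms⟩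
  have hnorm : ∀ f, ∑ j, v f j ^ 2 = t ^ 2 * m := by
    intro f
    rw [← Fintype.sum_of_injective φ hφ (fun p => a f p ^ 2) (fun j => v f j ^ 2)
      (fun j hj => by
        have : v f j = 0 := Function.extend_apply' _ _ _ (by simpa using hj)
        simp [this]) (fun p => by simp [v, hφ.extend_apply])]
    rw [Fintype.sum_prod_type]
    simp [a, ite_pow, mul_comm]
  have hdist : ∀ f g, 2 * t ^ 2 * (Finset.univ.filter fun i => f i ≠ g i).card ≤
      ∑ j, (v f - v g) j ^ 2 := by
    intro f g
    rw [← Fintype.sum_of_injective φ hφ (fun p => (a f p - a g p) ^ 2)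
      (fun j => (v f - v g) j ^ 2)
      (fun j hj => by
        have h1 : v f j = 0 := Function.extend_apply' _ _ _ (by simpa using hj)
        have h2 : v g j = 0 := Function.extend_apply' _ _ _ (by simpa using hj)
        simp [h1, h2]) (fun p => by simp [v, hφ.extend_apply])]
    rw [Fintype.sum_prod_type, Finset.card_filter]
    push_cast
    rw [Finset.mul_sum]
    refine Finset.sum_le_sum fun i _ => ?_
    split_ifs with h
    · have h3 : ∑ b ∈ ({f i, g i} : Finset (Fin q)), (a f (i, b) - a g (i, b)) ^ 2 ≤
          ∑ b, (a f (i, b) - a g (i, b)) ^ 2 :=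
        Finset.sum_le_sum_of_subset_of_nonneg (Finset.subset_univ _) fun _ _ _ => sq_nonneg _
      rw [Finset.sum_pair h] at h3
      simp only [a, if_true, if_neg h, if_neg (Ne.symm h)] at h3
      linarith
    · simp only [mul_zero]
      exact Finset.sum_nonneg fun _ _ => sq_nonneg _
  by_contra hcon
  push Not at hcon
  have hreal : ∀ f, 3 / 4 ≤ (obsLaw X σ (v f)).real {y | predLoss X (T y) (θ f) < r} := by
    intro f
    have := ENNReal.toReal_mono (by finiteness) (hcon (θ f))
    rw [ENNReal.toReal_ofReal (by linarith)] at this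
    refine le_trans ?_ this
    linarith
  have hmeas : ∀ f, MeasurableSet {y | predLoss X (T y) (θ f) < r} := fun f =>
    measurableSet_lt (measurable_predLoss X (θ f) hT) measurable_const
  have hq0 : 0 < q := by omega
  have hV : ∀ y, ((Finset.univ.filter fun f => y ∈ {y | predLoss X (T y) (θ f) < r}).card : ℝ) ≤
      (2 * √q) ^ m := by
    intro y
    rcases (Finset.univ.filter fun f => y ∈ {y | predLoss X (T y) (θ f) < r}).eq_empty_or_nonempty
      with he | ⟨g, hg⟩
    · rw [he]; simp only [Finset.card_empty, Nat.cast_zero]; positivity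
    · refine le_trans ?_ (card_hamming_ball_le m q hq0 g)
      refine Nat.cast_le.2 (Finset.card_le_card fun f hf => ?_)
      simp only [Finset.mem_filter, Finset.mem_univ, true_and, Set.mem_ofPred_eq] at hf hg ⊢
      have h1 := predLoss_triangle X (T y) (θ f) (θ g) hf hg
      have h2 := hlow (v f - v g) (by
        refine (Finset.card_le_card (t := (Finset.univ.filter fun j => v f j ≠ 0) ∪
          (Finset.univ.filter fun j => v g j ≠ 0)) ?_).trans ?_
        · intro j hj
          by_contra hne
          simp only [Finset.mem_union, Finset.mem_filter, Finset.mem_univ, true_and, not_or,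
            not_not] at hne
          simp [hne.1, hne.2] at hj
        · refine (Finset.card_union_le _ _).trans ?_
          have := hcard f
          have := hcard g
          omega)
      have h3 := hdist f g
      simp only [predLoss, θ] at h1
      rw [div_lt_iff₀ hn', hrt] at h1
      set N := (Finset.univ.filter fun i => f i ≠ g i).card
      have h4 : c ^ 2 * n * (2 * t ^ 2 * N) ≤ c ^ 2 * n * ∑ j, (v f - v g) j ^ 2 := by gcongr
      have h5 : (c ^ 2 * n * t ^ 2) * (2 * N) < (c ^ 2 * n * t ^ 2) * m := by linarith
      have h6 := lt_of_mul_lt_mul_left h5 (by positivity)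
      have : 2 * N < m := by exact_mod_cast h6
      omega
  -- the successes are averaged over `f` after a change of measure with `K = N / (4V)`
  have hsum := sum_filter_indicator_le (obsLaw X σ 0) _ hmeas hV
  set V : ℝ := (2 * √q) ^ m with hVdef
  set N : ℝ := (q : ℝ) ^ m with hN
  set b : ℝ := m * Real.log q / 4 with hb
  have hsq : 64 ≤ √(q : ℝ) := by
    rw [Real.le_sqrt (by norm_num) (by linarith)]; linarith
  have hV0 : 0 < V := by positivity
  have hN0 : 0 < N := by positivity
  have hchi : ∀ f, ∑ i, X.mulVec (v f) i ^ 2 ≤ σ ^ 2 * b := by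
    intro f
    refine (hup (v f) ((hcard f).trans hms)).trans (le_of_eq ?_)
    rw [hnorm, ht2, hb]
    field_simp
  have hK0 : 0 < N / (4 * V) := by positivity
  have hkey : ∀ f, 3 / 4 ≤ N / (4 * V) * (obsLaw X σ 0).real {y | predLoss X (T y) (θ f) < r} +
      Real.exp b / (4 * (N / (4 * V))) := fun f =>
    (hreal f).trans (obsLaw_le X hσ (v f) (hchi f) hK0 _)
  have htot := Finset.sum_le_sum fun f (_ : f ∈ Finset.univ) => hkey f
  rw [Finset.sum_add_distrib, ← Finset.mul_sum, Finset.sum_const, Finset.sum_const,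
    Finset.card_univ, Fintype.card_fun, Fintype.card_fin, Fintype.card_fin, nsmul_eq_mul,
    nsmul_eq_mul, Nat.cast_pow, ← hN] at htot
  have h1 : N / (4 * V) * ∑ f, (obsLaw X σ 0).real {y | predLoss X (T y) (θ f) < r} ≤
      N / 4 := by
    calc _ ≤ N / (4 * V) * V := by gcongr
      _ = N / 4 := by field_simp
  have h2 : N * (Real.exp b / (4 * (N / (4 * V)))) = Real.exp b * V := by field_simp
  -- `exp b = (q ^ (1/4)) ^ m`, while `N / V = (√q / 2) ^ m`
  have h3 : Real.exp b = √(√q) ^ m := by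
    rw [hb, mul_div_assoc, Real.exp_nat_mul, Real.sqrt_eq_rpow, Real.sqrt_eq_rpow,
      ← Real.rpow_mul (by positivity), Real.rpow_def_of_pos (by positivity)]
    congr 2
    ring
  have h4 : 8 ≤ √(√(q : ℝ)) := by
    rw [Real.le_sqrt (by norm_num) (by linarith)]; linarith
  have h5 : 4 * (Real.exp b * V) ≤ N := by
    rw [h3, hVdef, hN, ← mul_pow]
    have h6 : (4 : ℝ) ≤ 4 ^ m := le_self_pow₀ (by norm_num) (by omega)
    calc 4 * (√(√(q : ℝ)) * (2 * √q)) ^ m ≤ 4 ^ m * (√(√(q : ℝ)) * (2 * √q)) ^ m := by gcongr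
      _ = (8 * √(√(q : ℝ)) * √q) ^ m := by rw [← mul_pow]; congr 1; ring
      _ ≤ (√(√(q : ℝ)) * √(√(q : ℝ)) * √q) ^ m := by gcongr
      _ = (q : ℝ) ^ m := by
        rw [Real.mul_self_sqrt (by positivity), Real.mul_self_sqrt (by positivity)]
  rw [h2] at htot
  linarith

/-! ### The least squares upper bound -/

/-- Near-minimizers of a continuous nonnegative criterion can be selected measurably: the estimator
picks the first near-minimizer in a dense sequence. -/
lemma exists_measurable_near_argmin {Θ 𝒳 : Type*} [TopologicalSpace Θ]
    [SecondCountableTopology Θ] [Nonempty Θ] [MeasurableSpace Θ] [MeasurableSpace 𝒳]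
    (F : 𝒳 → Θ → ℝ) (h0 : ∀ y θ, 0 ≤ F y θ) (hF : ∀ θ, Measurable fun y => F y θ)
    (hc : ∀ y, Continuous (F y)) {ε : ℝ} (hε : 0 < ε) :
    ∃ T : 𝒳 → Θ, Measurable T ∧ ∀ y θ, F y (T y) ≤ F y θ + ε := by
  set u := TopologicalSpace.denseSeq Θ with hu
  have hex : ∀ y, ∃ k, ∀ j, F y (u k) ≤ F y (u j) + ε := by
    intro y
    have hbdd : BddBelow (Set.range fun k => F y (u k)) := ⟨0, by rintro _ ⟨k, rfl⟩; exact h0 _ _⟩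
    obtain ⟨k, hk⟩ := exists_lt_of_ciInf_lt (f := fun k => F y (u k))
      (lt_add_of_pos_right (⨅ k, F y (u k)) hε)
    exact ⟨k, fun j => by linarith [ciInf_le hbdd j]⟩
  refine ⟨fun y => u (Nat.find (hex y)), ?_, fun y θ => ?_⟩
  · refine Measurable.find (f := fun k _ => u k)
      (p := fun k y => ∀ j, F y (u k) ≤ F y (u j) + ε) (fun _ => measurable_const) (fun k => ?_) hex
    rw [show {y | ∀ j, F y (u k) ≤ F y (u j) + ε} = ⋂ j, {y | F y (u k) ≤ F y (u j) + ε} by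
      ext; simp]
    exact MeasurableSet.iInter fun j => measurableSet_le (hF _) ((hF _).add_const ε)
  · refine (TopologicalSpace.denseRange_denseSeq Θ).induction_on
      (p := fun θ => F y (u (Nat.find (hex y))) ≤ F y θ + ε) θ ?_ (Nat.find_spec (hex y))
    exact isClosed_le continuous_const ((hc y).add continuous_const)

lemma obsLaw_eq_map {n d : ℕ} (X : Matrix (Fin n) (Fin d) ℝ) (σ : ℝ) (θ : Fin d → ℝ) :
    obsLaw X σ θ = (stdGaussian (EuclideanSpace ℝ (Fin n))).map
      (fun ξ i => X.mulVec θ i + σ * ξ i) := by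
  rw [← map_pi_eq_stdGaussian, Measure.map_map (by fun_prop) (by fun_prop)]
  have h := Measure.pi_map_pi (μ := fun _ : Fin n => gaussianReal 0 1)
    (f := fun i x => X.mulVec θ i + σ * x)
    (hμ := fun i => by
      have := Measure.isProbabilityMeasure_map (μ := gaussianReal 0 1)
        (f := fun x => X.mulVec θ i + σ * x) (by fun_prop)
      infer_instance) (fun i => by fun_prop)
  have h1 : ∀ i, (gaussianReal 0 1).map (fun x => X.mulVec θ i + σ * x) =
      gaussianReal (X.mulVec θ i) ((σ ^ 2).toNNReal) := by
    intro i
    rw [show (fun x => X.mulVec θ i + σ * x) = (fun x => X.mulVec θ i + x) ∘ (fun x => σ * x) from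
      rfl, ← Measure.map_map (by fun_prop) (by fun_prop), gaussianReal_map_const_mul,
      gaussianReal_map_const_add]
    congr 1
    · ring
    · ext; simp [sq_nonneg]
  simp_rw [h1] at h
  exact h.symm

/-- There are at most `(e d / s) ^ (2s)` subsets of size at most `2s`: weigh each subset `S` by
`(s / d) ^ |S|` and sum. -/
lemma card_small_subsets_le {d s : ℕ} (hs : 1 ≤ s) (hsd : s ≤ d) :
    ((Finset.univ.filter fun S : Finset (Fin d) => S.card ≤ 2 * s).card : ℝ) ≤
      Real.exp (2 * (s * Real.log (Real.exp 1 * d / s))) := by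
  have hs0 : (0 : ℝ) < s := by exact_mod_cast hs
  have hd0 : (0 : ℝ) < d := by exact_mod_cast (by omega : 0 < d)
  have hsd' : (s : ℝ) ≤ d := by exact_mod_cast hsd
  set x : ℝ := s / d with hx
  have hx0 : 0 < x := by positivity
  have hx1 : x ≤ 1 := by rw [hx, div_le_one hd0]; exact hsd'
  have h1 : x ^ (2 * s) * ((Finset.univ.filter fun S : Finset (Fin d) => S.card ≤ 2 * s).card : ℝ) ≤
      Real.exp s := by
    calc _ = ∑ S ∈ Finset.univ.filter (fun S : Finset (Fin d) => S.card ≤ 2 * s), x ^ (2 * s) := by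
          rw [Finset.sum_const, nsmul_eq_mul, mul_comm]
      _ ≤ ∑ S ∈ Finset.univ.filter (fun S : Finset (Fin d) => S.card ≤ 2 * s), x ^ S.card :=
          Finset.sum_le_sum fun S hS =>
            pow_le_pow_of_le_one hx0.le hx1 (by simpa using hS)
      _ ≤ ∑ S : Finset (Fin d), x ^ S.card :=
          Finset.sum_le_sum_of_subset_of_nonneg (Finset.subset_univ _) fun _ _ _ => by positivity
      _ = (x + 1) ^ d := by
          have := Fintype.sum_pow_mul_eq_add_pow (Fin d) x 1
          simpa using this
      _ ≤ Real.exp x ^ d := by gcongr; exact Real.add_one_le_exp x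
      _ = Real.exp s := by
          rw [← Real.exp_nat_mul, hx]
          congr 1
          field_simp
  have h2 : Real.exp (2 * (s * Real.log (Real.exp 1 * d / s))) =
      Real.exp (2 * s) / x ^ (2 * s) := by
    rw [show 2 * ((s : ℝ) * Real.log (Real.exp 1 * d / s)) =
      ((2 * s : ℕ) : ℝ) * Real.log (Real.exp 1 * d / s) by push_cast; ring, Real.exp_nat_mul,
      Real.exp_log (by positivity), show Real.exp (2 * s) = Real.exp 1 ^ (2 * s) by
        rw [← Real.exp_nat_mul]; push_cast; ring_nf, ← div_pow, hx]
    congr 1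
    field_simp
  rw [h2, le_div_iff₀ (by positivity), mul_comm]
  exact h1.trans (Real.exp_le_exp.2 (by linarith))

lemma one_le_log_ratio {d s : ℕ} (hs : 1 ≤ s) (hsd : s ≤ d) :
    1 ≤ Real.log (Real.exp 1 * d / s) := by
  have hs0 : (0 : ℝ) < s := by exact_mod_cast hs
  have hsd' : (s : ℝ) ≤ d := by exact_mod_cast hsd
  rw [Real.le_log_iff_exp_le (by have := hs0.trans_le hsd'; positivity), le_div_iff₀ hs0]
  gcongr

/-- Uniform control of the noise over all directions `Xv` with `v` having at most `2s` nonzero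
entries: a union bound over the supports. -/
lemma noise_event {n d s : ℕ} (X : Matrix (Fin n) (Fin d) ℝ) (hs : 1 ≤ s) (hsd : s ≤ d)
    {δ : ℝ} (hδ : 0 < δ) (hδ1 : δ ≤ 1) :
    stdGaussian (EuclideanSpace ℝ (Fin n)) {ξ | ∃ v : Fin d → ℝ,
      (Finset.univ.filter fun j => v j ≠ 0).card ≤ 2 * s ∧
      16 * (s * Real.log (Real.exp 1 * d / s) + Real.log (1 / δ)) * ∑ i, X.mulVec v i ^ 2 <
        (∑ i, ξ i * X.mulVec v i) ^ 2} ≤ ENNReal.ofReal δ := by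
  set R := s * Real.log (Real.exp 1 * d / s) + Real.log (1 / δ) with hR
  let col : Fin d → EuclideanSpace ℝ (Fin n) := fun j => WithLp.toLp 2 fun i => X i j
  let U : Finset (Fin d) → Submodule ℝ (EuclideanSpace ℝ (Fin n)) :=
    fun S => Submodule.span ℝ (S.image col : Finset _)
  have hU : ∀ S : Finset (Fin d), S.card ≤ 2 * s → Module.finrank ℝ (U S) ≤ 2 * s := fun S hS =>
    (finrank_span_finset_le_card _).trans (Finset.card_image_le.trans hS)
  set 𝒮 := Finset.univ.filter fun S : Finset (Fin d) => S.card ≤ 2 * s with h𝒮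
  have hsub : {ξ : EuclideanSpace ℝ (Fin n) | ∃ v : Fin d → ℝ,
      (Finset.univ.filter fun j => v j ≠ 0).card ≤ 2 * s ∧
      16 * R * ∑ i, X.mulVec v i ^ 2 < (∑ i, ξ i * X.mulVec v i) ^ 2} ⊆
      ⋃ S ∈ 𝒮, {ξ | ∃ u ∈ U S, 16 * R * ‖u‖ ^ 2 < inner ℝ ξ u ^ 2} := by
    rintro ξ ⟨v, hv, hlt⟩
    refine Set.mem_iUnion₂.2 ⟨Finset.univ.filter fun j => v j ≠ 0, by simpa [h𝒮] using hv,
      WithLp.toLp 2 (X.mulVec v), ?_, ?_⟩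
    · have : WithLp.toLp 2 (X.mulVec v) =
          ∑ j ∈ Finset.univ.filter (fun j => v j ≠ 0), v j • col j := by
        rw [Finset.sum_filter_of_ne (fun j _ h => by rintro h0; simp [h0] at h)]
        ext i
        simp [col, Matrix.mulVec, dotProduct, mul_comm]
      rw [this]
      refine Submodule.sum_mem _ fun j hj => Submodule.smul_mem _ _ (Submodule.subset_span ?_)
      exact Finset.mem_coe.2 (Finset.mem_image_of_mem _ hj)
    · rw [EuclideanSpace.real_norm_sq_eq]
      simpa [PiLp.inner_apply, mul_comm] using hlt
  refine (measure_mono hsub).trans ((measure_biUnion_finset_le _ _).trans ?_)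
  have hone : ∀ S ∈ 𝒮, stdGaussian (EuclideanSpace ℝ (Fin n))
      {ξ | ∃ u ∈ U S, 16 * R * ‖u‖ ^ 2 < inner ℝ ξ u ^ 2} ≤
        ENNReal.ofReal (Real.exp ((2 * s : ℕ) - 16 * R / 4)) := fun S hS =>
    chisq_tail (U S) (hU S (by simpa [h𝒮] using hS)) _
  refine (Finset.sum_le_sum hone).trans ?_
  rw [Finset.sum_const, nsmul_eq_mul, ← ENNReal.ofReal_natCast,
    ← ENNReal.ofReal_mul (by positivity)]
  apply ENNReal.ofReal_le_ofReal
  have hc := card_small_subsets_le hs hsd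
  have hl := one_le_log_ratio hs hsd
  have hs0 : (1 : ℝ) ≤ s := by exact_mod_cast hs
  have hδe : δ = Real.exp (-Real.log (1 / δ)) := by
    rw [one_div, Real.log_inv, neg_neg, Real.exp_log hδ]
  have hlog : 0 ≤ Real.log (1 / δ) := Real.log_nonneg (by rwa [le_div_iff₀ hδ, one_mul])
  -- the exponent is `2a + 2s - 4R ≤ -log (1 / δ)`, where `s ≤ a ≤ R`
  calc _ ≤ Real.exp (2 * (s * Real.log (Real.exp 1 * d / s))) *
        Real.exp ((2 * s : ℕ) - 16 * R / 4) := by gcongr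
    _ = Real.exp (2 * (s * Real.log (Real.exp 1 * d / s)) + ((2 * s : ℕ) - 16 * R / 4)) :=
        (Real.exp_add _ _).symm
    _ ≤ Real.exp (-Real.log (1 / δ)) := by
        apply Real.exp_le_exp.2
        push_cast
        rw [hR]
        nlinarith
    _ = δ := hδe.symm

/-- Risk bound for approximate least squares over the sparse vectors. The basic inequality bounds
`‖XΔ‖²` by twice the inner product of the noise with `XΔ`, where `Δ` is the estimation error and
has at most `2s` nonzero entries. The design is arbitrary here. -/
lemma least_squares_upper {n d s : ℕ} (hn : 0 < n) (X : Matrix (Fin n) (Fin d) ℝ) {σ : ℝ}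
    (hσ : 0 < σ) (hs : 1 ≤ s) (hsd : s ≤ d) {δ : ℝ} (hδ : 0 < δ) (hδ' : δ ≤ 1 / 4) :
    minimaxQuantile (fun θ : SparseVec d s => {obsLaw X σ θ.1}) (predLoss X) δ ≤
      ENNReal.ofReal (66 * σ ^ 2 *
        (s * Real.log (Real.exp 1 * d / s) + Real.log (1 / δ)) / n) := by
  have hn' : (0 : ℝ) < n := by exact_mod_cast hn
  have hevent := noise_event X hs hsd hδ (by linarith)
  set R := s * Real.log (Real.exp 1 * d / s) + Real.log (1 / δ) with hR
  have hs0 : (1 : ℝ) ≤ s := by exact_mod_cast hs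
  have hlog : 0 ≤ Real.log (1 / δ) := Real.log_nonneg (by rw [le_div_iff₀ hδ]; linarith)
  have hR0 : 0 < R := by
    have := one_le_log_ratio hs hsd
    have : 0 < s * Real.log (Real.exp 1 * d / s) := by positivity
    linarith
  have : Nonempty (SparseVec d s) := ⟨⟨0, by simp⟩⟩
  have hcont : ∀ i, Continuous fun θ : SparseVec d s => X.mulVec θ.1 i := fun i => by
    simp only [Matrix.mulVec, dotProduct]
    exact continuous_finsetSum _ fun j _ =>
      continuous_const.mul ((continuous_apply j).comp continuous_subtype_val)
  obtain ⟨T, hT, hTmin⟩ := exists_measurable_near_argmin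
    (fun (y : Fin n → ℝ) (θ : SparseVec d s) => ∑ i, (y i - X.mulVec θ.1 i) ^ 2)
    (fun y θ => Finset.sum_nonneg fun _ _ => sq_nonneg _) (fun θ => by fun_prop)
    (fun y => continuous_finsetSum _ fun i _ => (continuous_const.sub (hcont i)).pow 2)
    (ε := σ ^ 2 * R) (by positivity)
  refine minimaxQuantile_le (fun θ : SparseVec d s => obsLaw X σ θ.1) _ _ _ T hT fun θ => ?_
  rw [obsLaw_eq_map, Measure.map_apply (by fun_prop)
    (measurableSet_le (measurable_predLoss X θ hT) measurable_const)]
  rw [ENNReal.ofReal_sub _ hδ.le, ENNReal.ofReal_one, tsub_le_iff_right]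
  refine le_trans ?_ (add_le_add_right hevent _)
  refine le_trans ?_ (measure_union_le _ _)
  rw [← measure_univ (μ := stdGaussian (EuclideanSpace ℝ (Fin n)))]
  refine measure_mono fun ξ _ => ?_
  rw [Set.mem_union, or_iff_not_imp_right]
  intro hξ
  simp only [Set.mem_ofPred_eq, not_exists, not_and, not_lt] at hξ
  simp only [Set.mem_preimage, Set.mem_ofPred_eq, predLoss]
  set y : Fin n → ℝ := fun i => X.mulVec θ.1 i + σ * ξ i with hy
  have h1 := hξ ((T y).1 - θ.1) (by
    refine (Finset.card_le_card (t := (Finset.univ.filter fun j => (T y).1 j ≠ 0) ∪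
      (Finset.univ.filter fun j => θ.1 j ≠ 0)) ?_).trans ?_
    · intro j hj
      by_contra hne
      simp only [Finset.mem_union, Finset.mem_filter, Finset.mem_univ, true_and, not_or,
        not_not] at hne
      simp [hne.1, hne.2] at hj
    · refine (Finset.card_union_le _ _).trans ?_
      have := (T y).2
      have := θ.2
      omega)
  have h2 := hTmin y θ
  set Δ := (T y).1 - θ.1 with hΔ
  have h3 : ∀ i, y i - X.mulVec (T y).1 i = σ * ξ i - X.mulVec Δ i := by
    intro i
    rw [hΔ, Matrix.mulVec_sub]
    simp only [hy, Pi.sub_apply]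
    ring
  have h4 : ∀ i, y i - X.mulVec θ.1 i = σ * ξ i := fun i => by simp [hy]
  simp only [h3, h4] at h2
  set D := ∑ i, X.mulVec Δ i ^ 2 with hD
  set w := ∑ i, ξ i * X.mulVec Δ i with hw
  have hexp : ∑ i, (σ * ξ i - X.mulVec Δ i) ^ 2 = ∑ i, (σ * ξ i) ^ 2 - 2 * σ * w + D := by
    rw [hD, hw, Finset.mul_sum, ← Finset.sum_sub_distrib, ← Finset.sum_add_distrib]
    exact Finset.sum_congr rfl fun i _ => by ring
  rw [hexp] at h2
  have hD0 : 0 ≤ D := Finset.sum_nonneg fun _ _ => sq_nonneg _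
  -- `2σw ≤ 8σ√(RD) ≤ D / 2 + 32σ²R`
  have h5 : 2 * σ * w ≤ D / 2 + 32 * σ ^ 2 * R := by
    refine abs_le_of_sq_le_sq' ?_ (by positivity) |>.2
    have h6 : (2 * σ * w) ^ 2 ≤ 4 * σ ^ 2 * (16 * R * D) := by
      rw [mul_pow, mul_pow]
      norm_num
      gcongr
    nlinarith [sq_nonneg (D / 2 - 32 * σ ^ 2 * R)]
  rw [div_le_div_iff_of_pos_right hn']
  linarith

/-! ### Comparison of the rates -/

/-- In dimension at least `4096` the coordinates contain `m = min s (d / 4096)` disjoint blocks of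
length `q ≥ 4096`, and `m log q` is then of the order of `s log (e d / s)`. -/
lemma rate_comparison {d s : ℕ} (hs : 1 ≤ s) (hd : 4096 ≤ d) :
    ∃ m q : ℕ, 1 ≤ m ∧ m ≤ s ∧ 4096 ≤ q ∧ m * q ≤ d ∧
      s * Real.log (Real.exp 1 * d / s) ≤ 8192 * (m * Real.log q) := by
  have hs0 : (1 : ℝ) ≤ s := by exact_mod_cast hs
  have hlog2 : ∀ q : ℕ, 4096 ≤ q → 2 ≤ Real.log q := by
    intro q hq
    have hq' : (4096 : ℝ) ≤ q := by exact_mod_cast hq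
    rw [Real.le_log_iff_exp_le (by linarith)]
    have h := Real.exp_one_lt_d9
    have h2 : Real.exp 2 = Real.exp 1 * Real.exp 1 := by rw [← Real.exp_add]; norm_num
    nlinarith [Real.exp_pos 1]
  rcases le_or_gt s (d / 4096) with h | h
  · have hq : 4096 ≤ d / s := by
      rw [Nat.le_div_iff_mul_le (by omega)]
      have := Nat.div_mul_le_self d 4096
      nlinarith
    refine ⟨s, d / s, hs, le_rfl, hq, Nat.mul_div_le d s, ?_⟩
    have hL := hlog2 _ hq
    have hq0 : (4096 : ℝ) ≤ (d / s : ℕ) := by exact_mod_cast hq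
    have h1 : (d : ℝ) / s ≤ 2 * (d / s : ℕ) := by
      rw [div_le_iff₀ (by linarith)]
      have h2 : d < (d / s + 1) * s := by
        have h5 := Nat.div_add_mod d s
        have h6 := Nat.mod_lt d (by omega : s > 0)
        nlinarith
      have h3 : (d : ℝ) ≤ ((d / s : ℕ) + 1) * s := by exact_mod_cast h2.le
      nlinarith
    have hd0 : (0 : ℝ) < d := by exact_mod_cast (by omega : 0 < d)
    have h2 : Real.log (Real.exp 1 * d / s) ≤ 1 + (Real.log 2 + Real.log (d / s : ℕ)) := by
      rw [mul_div_assoc, Real.log_mul (by positivity) (by positivity), Real.log_exp,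
        ← Real.log_mul (by norm_num) (by linarith)]
      gcongr
    have h3 : Real.log 2 ≤ 1 := by linarith [Real.log_two_lt_d9]
    have h4 : Real.log (Real.exp 1 * d / s) ≤ 2 * Real.log (d / s : ℕ) := by linarith
    calc _ ≤ s * (2 * Real.log (d / s : ℕ)) := by gcongr
      _ = 2 * (s * Real.log (d / s : ℕ)) := by ring
      _ ≤ _ := by gcongr; norm_num
  · have hd1 : 1 ≤ d / 4096 := by omega
    refine ⟨d / 4096, 4096, hd1, h.le, le_rfl, Nat.div_mul_le_self d 4096, ?_⟩
    have hL := hlog2 4096 le_rfl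
    have h1 : s * Real.log (Real.exp 1 * d / s) ≤ d := by
      have hd0 : (0 : ℝ) < d := by exact_mod_cast (by omega : 0 < d)
      rw [mul_div_assoc, Real.log_mul (by positivity) (by positivity), Real.log_exp]
      have := Real.log_le_sub_one_of_pos (x := (d : ℝ) / s) (by positivity)
      calc _ ≤ (s : ℝ) * (d / s) := by gcongr; linarith
        _ = d := by field_simp
    have h2 : d ≤ 8192 * (d / 4096) := by omega
    have h3 : (d : ℝ) ≤ 8192 * (d / 4096 : ℕ) := by exact_mod_cast h2
    have h4 : (0 : ℝ) ≤ (d / 4096 : ℕ) := by positivity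
    have h5 := mul_le_mul_of_nonneg_left hL h4
    linarith

/-- The restricted eigenvalue condition bounds `‖Xv‖` from below when `v` has at most
`2s` nonzero entries. -/
lemma sparse_norm_lower {n d s : ℕ} {c σ : ℝ} (hc : 0 < c) (hn : 0 < n) (hσ : 0 < σ)
    {X : Matrix (Fin n) (Fin d) ℝ}
    (h : ∀ v ∈ wreCone n d σ (max s 2) 3, v ≠ 0 →
      c ≤ Real.sqrt (∑ i, (X.mulVec v i) ^ 2) / (Real.sqrt n * Real.sqrt (∑ j, v j ^ 2)))
    (v : Fin d → ℝ) (hv : (Finset.univ.filter fun j => v j ≠ 0).card ≤ 2 * s) :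
    c ^ 2 * n * ∑ j, v j ^ 2 ≤ ∑ i, X.mulVec v i ^ 2 := by
  rcases eq_or_ne v 0 with rfl | hne
  · simp
  have h1 := h v (mem_wreCone_of_sparse n (by omega) (le_max_left s 2) hσ v hv) hne
  have hpos : 0 < ∑ j, v j ^ 2 := by
    obtain ⟨j, hj⟩ := Function.ne_iff.1 hne
    exact Finset.sum_pos' (fun _ _ => sq_nonneg _) ⟨j, Finset.mem_univ j, sq_pos_of_ne_zero hj⟩
  have hn' : (0 : ℝ) < n := by exact_mod_cast hn
  rw [le_div_iff₀ (by positivity)] at h1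
  have h2 := pow_le_pow_left₀ (by positivity) h1 2
  rw [mul_pow, mul_pow, Real.sq_sqrt hn'.le, Real.sq_sqrt hpos.le,
    Real.sq_sqrt (Finset.sum_nonneg fun _ _ => sq_nonneg _)] at h2
  linarith

lemma sparse_norm_upper {n d s : ℕ} {C : ℝ} {X : Matrix (Fin n) (Fin d) ℝ}
    (h : ∀ T : Finset (Fin d), T.card ≤ max s 2 →
      ∀ v : Fin d → ℝ, (∀ j ∉ T, v j = 0) → (∑ j, v j ^ 2) ≤ 1 →
        Real.sqrt (∑ i, (X.mulVec v i) ^ 2) ≤ C * Real.sqrt n)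
    (v : Fin d → ℝ) (hv : (Finset.univ.filter fun j => v j ≠ 0).card ≤ s) :
    ∑ i, X.mulVec v i ^ 2 ≤ C ^ 2 * n * ∑ j, v j ^ 2 := by
  rcases eq_or_ne v 0 with rfl | hne
  · simp
  have hpos : 0 < ∑ j, v j ^ 2 := by
    obtain ⟨j, hj⟩ := Function.ne_iff.1 hne
    exact Finset.sum_pos' (fun _ _ => sq_nonneg _) ⟨j, Finset.mem_univ j, sq_pos_of_ne_zero hj⟩
  set a := √(∑ j, v j ^ 2) with ha
  have ha0 : 0 < a := Real.sqrt_pos.2 hpos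
  have ha2 : a ^ 2 = ∑ j, v j ^ 2 := Real.sq_sqrt hpos.le
  have h1 := h (Finset.univ.filter fun j => v j ≠ 0) (hv.trans (le_max_left _ _)) (a⁻¹ • v)
    (fun j hj => by
      have : v j = 0 := by simpa using hj
      simp [this]) (by
      simp only [Pi.smul_apply, smul_eq_mul, mul_pow]
      rw [← Finset.mul_sum, ← ha2, ← mul_pow, inv_mul_cancel₀ ha0.ne', one_pow])
  have h2 := pow_le_pow_left₀ (by positivity) h1 2
  rw [mul_pow, Real.sq_sqrt (Nat.cast_nonneg n),
    Real.sq_sqrt (Finset.sum_nonneg fun _ _ => sq_nonneg _)] at h2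
  simp only [Matrix.mulVec_smul, Pi.smul_apply, smul_eq_mul, mul_pow] at h2
  rw [← Finset.mul_sum, inv_pow, inv_mul_le_iff₀ (by positivity), ha2] at h2
  linarith

/-- sparse linear regression with fixed design. -/
theorem sparse_linear_regression (c C : ℝ) (hc : 0 < c) (hC : 0 < C) :
    ∃ c₁ C₁ : ℝ, 0 < c₁ ∧ 0 < C₁ ∧
      ∀ n d s : ℕ, 0 < n → 0 < d → 1 ≤ s → s ≤ d → ∀ σ : ℝ, 0 < σ →
        ∀ X : Matrix (Fin n) (Fin d) ℝ,
          -- each column of `X` has Euclidean norm at most `√n`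
          (∀ j : Fin d, Real.sqrt (∑ i, X i j ^ 2) ≤ Real.sqrt n) →
          -- when `d = 1`, `‖X‖₂ ≥ c√n`
          (d = 1 → ∀ j : Fin d, c * Real.sqrt n ≤ Real.sqrt (∑ i, X i j ^ 2)) →
          -- when `d ≥ 2`, `ϑ(s ∨ 2, 3) ≥ c`
          (2 ≤ d → ∀ v ∈ wreCone n d σ (max s 2) 3, v ≠ 0 →
            c ≤ Real.sqrt (∑ i, (X.mulVec v i) ^ 2) /
              (Real.sqrt n * Real.sqrt (∑ j, v j ^ 2))) →
          -- when `d ≥ 2`, `max_{|T| ≤ s∨2} ‖X_T‖_op ≤ C√n`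
          (2 ≤ d → ∀ T : Finset (Fin d), T.card ≤ max s 2 →
            ∀ v : Fin d → ℝ, (∀ j ∉ T, v j = 0) → (∑ j, v j ^ 2) ≤ 1 →
              Real.sqrt (∑ i, (X.mulVec v i) ^ 2) ≤ C * Real.sqrt n) →
          ∀ δ : ℝ, 0 < δ → δ ≤ 1/4 →
            ENNReal.ofReal (c₁ * σ ^ 2 *
                (s * Real.log (Real.exp 1 * d / s) + Real.log (1/δ)) / n) ≤
                minimaxQuantile
                  (fun θ : {θ : Fin d → ℝ //
                      (Finset.univ.filter fun i => θ i ≠ 0).card ≤ s} =>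
                    {Measure.pi fun i : Fin n =>
                      gaussianReal (X.mulVec θ.1 i) ((σ ^ 2).toNNReal)})
                  (fun θ₁ θ₂ => (∑ i, (X.mulVec (θ₁.1 - θ₂.1) i) ^ 2) / n) δ ∧
              minimaxQuantile
                  (fun θ : {θ : Fin d → ℝ //
                      (Finset.univ.filter fun i => θ i ≠ 0).card ≤ s} =>
                    {Measure.pi fun i : Fin n =>
                      gaussianReal (X.mulVec θ.1 i) ((σ ^ 2).toNNReal)})
                  (fun θ₁ θ₂ => (∑ i, (X.mulVec (θ₁.1 - θ₂.1) i) ^ 2) / n) δ ≤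
                ENNReal.ofReal (C₁ * σ ^ 2 *
                  (s * Real.log (Real.exp 1 * d / s) + Real.log (1/δ)) / n) := by
  set κ : ℝ := min (c ^ 2 / (131072 * C ^ 2)) (1 / 16) with hκ
  have hκ0 : 0 < κ := by positivity
  have hκ1 : κ ≤ c ^ 2 / (131072 * C ^ 2) := min_le_left _ _
  have hκ2 : κ ≤ 1 / 16 := min_le_right _ _
  refine ⟨κ / 4097, 66, by positivity, by norm_num, ?_⟩
  intro n d s hn hd hs hsd σ hσ X _ hX1 hX2 hX3 δ hδ hδ'
  refine ⟨?_, least_squares_upper hn X hσ hs hsd hδ hδ'⟩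
  have hn' : (0 : ℝ) < n := by exact_mod_cast hn
  set a := s * Real.log (Real.exp 1 * d / s) with ha
  set b := Real.log (1 / δ) with hb
  have hb1 : 1 ≤ b := by
    rw [hb, Real.le_log_iff_exp_le (by positivity), le_div_iff₀ hδ]
    nlinarith [Real.exp_one_lt_d9]
  have hcol : 0 < ∑ i, X i ⟨0, hd⟩ ^ 2 := by
    rcases (show d = 1 ∨ 2 ≤ d by omega) with h1 | h2
    · have := lt_of_lt_of_le (by positivity) (hX1 h1 ⟨0, hd⟩)
      exact Real.sqrt_pos.1 this
    · have := sparse_norm_lower hc hn hσ (hX2 h2) (Pi.single ⟨0, hd⟩ 1) (by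
        refine (Finset.card_le_card (t := {⟨0, hd⟩}) ?_).trans (by simp; omega)
        intro i hi
        by_contra hne
        simp only [Finset.mem_singleton] at hne
        simp [Pi.single_apply, hne] at hi)
      simp only [Matrix.mulVec_single_one, Matrix.col_apply] at this
      refine lt_of_lt_of_le ?_ this
      simp only [Pi.single_apply, ite_pow]
      simp
      positivity
  have htwo := two_point_lower hn X hσ hs ⟨0, hd⟩ hcol hδ hδ'
  have htwo' : ∀ x, x * (16 * 4097) ≤ 4097 * b → ENNReal.ofReal (σ ^ 2 * x / n) ≤
      minimaxQuantile (fun θ : SparseVec d s => {obsLaw X σ θ.1}) (predLoss X) δ := by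
    intro x hx
    refine (ENNReal.ofReal_le_ofReal ?_).trans htwo
    rw [div_le_div_iff₀ hn' (by positivity)]
    have : 0 ≤ σ ^ 2 * n := by positivity
    nlinarith
  rw [show κ / 4097 * σ ^ 2 * (a + b) / n = σ ^ 2 * (κ / 4097 * (a + b)) / n by ring]
  have ha0 : 0 ≤ a := by
    have := one_le_log_ratio hs hsd
    positivity
  rcases lt_or_ge d 4096 with hlt | hge
  · -- `s log (e d / s) ≤ d` is bounded, so that `log (1 / δ)` dominates
    have h1 : a ≤ 4096 := by
      have hs0 : (0 : ℝ) < s := by exact_mod_cast hs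
      have hd0 : (0 : ℝ) < d := by exact_mod_cast hd
      have h2 := Real.log_le_sub_one_of_pos (x := (d : ℝ) / s) (by positivity)
      rw [ha, mul_div_assoc, Real.log_mul (by positivity) (by positivity), Real.log_exp]
      calc _ ≤ (s : ℝ) * (d / s) := by gcongr; linarith
        _ = d := by field_simp
        _ ≤ 4096 := by exact_mod_cast hlt.le
    apply htwo'
    nlinarith
  · rcases le_total a b with hab | hab
    · apply htwo'
      nlinarith
    · obtain ⟨m, q, hm, hms, hq, hmq, hr⟩ := rate_comparison hs hge
      have h2 : 2 ≤ d := by omega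
      refine (ENNReal.ofReal_le_ofReal ?_).trans (many_point_lower hn X hσ hc hC hm hms hq hmq
        (sparse_norm_lower hc hn hσ (hX2 h2)) (sparse_norm_upper (hX3 h2)) hδ')
      set M := m * Real.log q with hM
      have h3 : κ / 4097 * (a + b) ≤ c ^ 2 / (131072 * C ^ 2) * (8192 * M) := by
        calc κ / 4097 * (a + b) ≤ κ / 4097 * (2 * a) := by gcongr; linarith
          _ = κ * a * (2 / 4097) := by ring
          _ ≤ κ * a * 1 := by gcongr; norm_num
          _ ≤ _ := by rw [mul_one]; gcongr
      calc σ ^ 2 * (κ / 4097 * (a + b)) / n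
          ≤ σ ^ 2 * (c ^ 2 / (131072 * C ^ 2) * (8192 * M)) / n := by gcongr
        _ = c ^ 2 * σ ^ 2 * M / (16 * C ^ 2 * n) := by field_simp; ring
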